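/- arXiv:1701.06264 — 2 statements merged into one kernel-verified Lean document; each statement's English description precedes it below -/
import Mathlib

section
/- Let n ≥ 1, λ > 0 and κ > 0. Let p and q be Lipschitz probability densities on ℝⁿ, both vanishing outside a compact set D. Suppose L* : ℝⁿ → ℝ is nonnegative and κ-Lipschitz and satisfies: (a) S(L*; p, q) ≤ S(L; p, q) for every nonnegative κ-Lipschitz function L : ℝⁿ → ℝ, and (b) ∫ L*(z) q(z) dz ≤ ∫ L*(x) p(x) dx. Then p(x) ≥ (λ/(1+λ)) q(x) for Lebesgue-almost every x, and consequently ∫ |p(x) − q(x)| dx ≤ 2/λ. (Paper's Lemma 1: distributional consistency of the LS-GAN at a Nash equilibrium.) -/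
open MeasureTheory

/-- The LS-GAN objective `S(L; p, q)`:
`S(L; p, q) = ∫ L(x) p(x) dx + lam * ∬ (‖x − z‖ + L(x) − L(z))₊ p(x) q(z) dx dz`. -/
noncomputable def lsganS (n : ℕ) (lam : ℝ)
    (L p q : EuclideanSpace ℝ (Fin n) → ℝ) : ℝ :=
  (∫ x, L x * p x) +
    lam * ∫ x, ∫ z, max (‖x - z‖ + L x - L z) 0 * (p x * q z)

/-!
Clipping only increases the margin term, and it does nothing to a 1-Lipschitz function. Hence,
with `W = ∬ ‖x − z‖ p(x) q(z)`, the objective of the minimizer `L` is at least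
`∫ L p + λ (W + ∫ L p − ∫ L q) ≥ λ W`, while a competitor `f` that is also 1-Lipschitz has
objective exactly `λ W + (1 + λ) ∫ f p − λ ∫ f q`. Minimality therefore gives
`λ ∫ f q ≤ (1 + λ) ∫ f p`. This inequality is homogeneous in `f`, so it holds for every
nonnegative Lipschitz `f`, and such functions determine the order between finite measures.
With `c = λ / (1 + λ)`, the `L¹` bound follows by writing `p − q` as the difference of
`p − c q ≥ 0` and `(1 − c) q ≥ 0`, both of integral `1 − c`.
-/

open scoped NNReal BoundedContinuousFunction

section MeasureComparison

variable {X : Type*} [MeasurableSpace X]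

theorem measure_le_of_forall_isClosed_le [TopologicalSpace X] {μ ν : Measure X}
    [IsFiniteMeasure μ] [μ.WeaklyRegular] (h : ∀ F, IsClosed F → μ F ≤ ν F) : μ ≤ ν := by
  refine Measure.le_iff.2 fun s hs => ?_
  rw [hs.measure_eq_iSup_isClosed_of_ne_top (measure_ne_top μ s)]
  exact iSup₂_le fun F hFs => iSup_le fun hF => (h F hF).trans (measure_mono hFs)

theorem measure_le_of_forall_integral_lipschitz_le [PseudoEMetricSpace X] [BorelSpace X]
    {μ ν : Measure X} [IsFiniteMeasure μ] [IsFiniteMeasure ν]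
    (h : ∀ (f : X →ᵇ ℝ≥0) (K : ℝ≥0), LipschitzWith K f → ∫ x, (f x : ℝ) ∂μ ≤ ∫ x, (f x : ℝ) ∂ν) :
    μ ≤ ν := by
  refine measure_le_of_forall_isClosed_le fun F hF => ?_
  have hδ_pos (k : ℕ) : (0 : ℝ) < 1 / (k + 1) := Nat.one_div_pos_of_nat
  have hlim (ρ : Measure X) [IsFiniteMeasure ρ] := tendsto_integral_thickenedIndicator_of_isClosed ρ
    hF hδ_pos tendsto_one_div_add_atTop_nhds_zero_nat
  have hreal : μ.real F ≤ ν.real F := le_of_tendsto_of_tendsto' (hlim μ) (hlim ν) fun k =>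
    h _ _ (lipschitzWith_thickenedIndicator (hδ_pos k) F)
  exact (ENNReal.toReal_le_toReal (measure_ne_top μ F) (measure_ne_top ν F)).1 hreal

end MeasureComparison

section Integrability

variable {X : Type*} [PseudoMetricSpace X] [MeasurableSpace X] [OpensMeasurableSpace X]
  {P Q : Measure X}

theorem integrable_of_lipschitzWith_of_integrable_dist [IsFiniteMeasure P] {f : X → ℝ} {K : ℝ≥0}
    (hf : LipschitzWith K f) {a : X} (ha : Integrable (fun x => dist x a) P) : Integrable f P := by
  refine ((integrable_const ‖f a‖).add (ha.const_mul (K : ℝ))).mono'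
    hf.continuous.aestronglyMeasurable (ae_of_all P fun x => ?_)
  calc ‖f x‖ ≤ ‖f a‖ + ‖f x - f a‖ := norm_le_norm_add_norm_sub' _ _
    _ ≤ ‖f a‖ + K * dist x a := by
      rw [← dist_eq_norm]
      gcongr
      exact hf.dist_le_mul x a

theorem integrable_of_lipschitzWith_of_integrable_dist_prod [IsFiniteMeasure P]
    [IsFiniteMeasure Q] [NeZero P] [NeZero Q]
    (hd : Integrable (fun w : X × X => dist w.1 w.2) (P.prod Q))
    {f : X → ℝ} {K : ℝ≥0} (hf : LipschitzWith K f) : Integrable f P ∧ Integrable f Q := by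
  obtain ⟨z, hz⟩ := hd.prod_left_ae.exists
  obtain ⟨x, hx⟩ := hd.prod_right_ae.exists
  simp only [dist_comm x] at hx
  exact ⟨integrable_of_lipschitzWith_of_integrable_dist hf hz,
    integrable_of_lipschitzWith_of_integrable_dist hf hx⟩

theorem integrable_dist_prod_of_isBounded [SecondCountableTopology X] [IsFiniteMeasure P]
    [IsFiniteMeasure Q] {D : Set X} (hD : Bornology.IsBounded D) (hP : ∀ᵐ x ∂P, x ∈ D)
    (hQ : ∀ᵐ z ∂Q, z ∈ D) : Integrable (fun w : X × X => dist w.1 w.2) (P.prod Q) := by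
  refine .of_bound continuous_dist.aestronglyMeasurable (Metric.diam D) ?_
  filter_upwards [Measure.quasiMeasurePreserving_fst.ae hP,
    Measure.quasiMeasurePreserving_snd.ae hQ] with w hw₁ hw₂
  rw [Real.norm_of_nonneg dist_nonneg]
  exact Metric.dist_le_diam_of_mem hD hw₁ hw₂

end Integrability

/-- The loss functions admissible in the LS-GAN game: nonnegative and `κ`-Lipschitz. -/
def admissibleLoss (X : Type*) [PseudoMetricSpace X] (κ : ℝ≥0) : Set (X → ℝ) :=
  {f | (∀ x, 0 ≤ f x) ∧ LipschitzWith κ f}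

theorem mem_admissibleLoss_iff_norm {E : Type*} [SeminormedAddCommGroup E] {κ : ℝ≥0} {f : E → ℝ} :
    f ∈ admissibleLoss E κ ↔ (∀ x, 0 ≤ f x) ∧ ∀ x z, |f x - f z| ≤ κ * ‖x - z‖ := by
  simp only [admissibleLoss, Set.mem_ofPred_eq, lipschitzWith_iff_dist_le_mul, dist_eq_norm,
    Real.norm_eq_abs]

section Objective

variable {X : Type*} [PseudoMetricSpace X]

theorem admissibleLoss_mono {κ κ' : ℝ≥0} (h : κ ≤ κ') :
    admissibleLoss X κ ⊆ admissibleLoss X κ' :=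
  fun _ hf => ⟨hf.1, hf.2.weaken h⟩

theorem exists_pos_mul_mem_admissibleLoss {κ K : ℝ≥0} (hκ : 0 < κ) {f : X → ℝ}
    (hf : f ∈ admissibleLoss X K) : ∃ ε : ℝ, 0 < ε ∧ (fun x => ε * f x) ∈ admissibleLoss X κ := by
  have hε : 0 < κ / (K + 1) := by positivity
  refine ⟨(κ / (K + 1) : ℝ≥0), by exact_mod_cast hε, fun x => mul_nonneg (NNReal.coe_nonneg _)
    (hf.1 x), ((lipschitzWith_smul ((κ / (K + 1) : ℝ≥0) : ℝ)).comp hf.2).weaken ?_⟩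
  rw [NNReal.nnnorm_eq, div_mul_eq_mul_div, div_le_iff₀ (by positivity)]
  gcongr
  exact le_self_add

variable [MeasurableSpace X] {lam : ℝ} {P Q : Measure X} {L f : X → ℝ} {κ : ℝ≥0}

/-- The LS-GAN objective `S(L; P, Q)` for data and generator distributions `P` and `Q` given as
measures; `lsganS` is the case of measures with densities. -/
noncomputable def lossObjective (lam : ℝ) (L : X → ℝ) (P Q : Measure X) : ℝ :=
  (∫ x, L x ∂P) + lam * ∫ x, ∫ z, max (dist x z + L x - L z) 0 ∂Q ∂P

/-- The LS-GAN objective without the positive part: an affine function of `L`, which bounds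
`lossObjective` from below. -/
noncomputable def unclippedObjective (lam : ℝ) (L : X → ℝ) (P Q : Measure X) : ℝ :=
  (∫ x, L x ∂P) +
    lam * ((∫ w, dist w.1 w.2 ∂P.prod Q) + (∫ x, L x ∂P) - ∫ z, L z ∂Q)

section FiniteMeasure

variable [IsFiniteMeasure P] [IsFiniteMeasure Q]

theorem integrable_margin (hd : Integrable (fun w : X × X => dist w.1 w.2) (P.prod Q))
    (hP : Integrable L P) (hQ : Integrable L Q) :
    Integrable (fun w : X × X => dist w.1 w.2 + L w.1 - L w.2) (P.prod Q) :=
  (hd.add (hP.comp_fst Q)).sub (hQ.comp_snd P)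

theorem lossObjective_eq_integral_prod
    (hd : Integrable (fun w : X × X => dist w.1 w.2) (P.prod Q)) (hP : Integrable L P)
    (hQ : Integrable L Q) : lossObjective lam L P Q =
      (∫ x, L x ∂P) + lam * ∫ w, max (dist w.1 w.2 + L w.1 - L w.2) 0 ∂P.prod Q := by
  rw [lossObjective, integral_prod _ (integrable_margin hd hP hQ).pos_part]

end FiniteMeasure

variable [IsProbabilityMeasure P] [IsProbabilityMeasure Q]

theorem unclippedObjective_eq_integral_prod
    (hd : Integrable (fun w : X × X => dist w.1 w.2) (P.prod Q)) (hP : Integrable L P)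
    (hQ : Integrable L Q) : unclippedObjective lam L P Q =
      (∫ x, L x ∂P) + lam * ∫ w, dist w.1 w.2 + L w.1 - L w.2 ∂P.prod Q := by
  have hP' := hP.comp_fst Q
  have hQ' := hQ.comp_snd P
  rw [unclippedObjective, integral_sub (hd.fun_add hP') hQ', integral_add hd hP',
    integral_fun_fst, integral_fun_snd, probReal_univ, probReal_univ, one_smul, one_smul]

theorem unclippedObjective_le_lossObjective (hlam : 0 ≤ lam)
    (hd : Integrable (fun w : X × X => dist w.1 w.2) (P.prod Q)) (hP : Integrable L P)
    (hQ : Integrable L Q) : unclippedObjective lam L P Q ≤ lossObjective lam L P Q := by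
  rw [unclippedObjective_eq_integral_prod hd hP hQ, lossObjective_eq_integral_prod hd hP hQ]
  have hmargin := integrable_margin hd hP hQ
  refine add_le_add le_rfl (mul_le_mul_of_nonneg_left ?_ hlam)
  exact integral_mono hmargin hmargin.pos_part fun _ => le_max_left _ _

theorem lossObjective_eq_unclippedObjective_of_lipschitzWith_one
    (hd : Integrable (fun w : X × X => dist w.1 w.2) (P.prod Q)) (hf : LipschitzWith 1 f)
    (hP : Integrable f P) (hQ : Integrable f Q) :
    lossObjective lam f P Q = unclippedObjective lam f P Q := by
  rw [unclippedObjective_eq_integral_prod hd hP hQ, lossObjective_eq_integral_prod hd hP hQ]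
  have hmargin_nonneg (w : X × X) : 0 ≤ dist w.1 w.2 + f w.1 - f w.2 := by
    have hle : f w.2 - f w.1 ≤ dist w.1 w.2 := by
      simpa only [NNReal.coe_one, one_mul, dist_comm w.2] using
        (Real.sub_le_dist _ _).trans (hf.dist_le_mul w.2 w.1)
    linarith
  simp only [max_eq_left (hmargin_nonneg _)]

end Objective

section Equilibrium

variable {X : Type*} [PseudoMetricSpace X] [MeasurableSpace X] {lam : ℝ} {P Q : Measure X}
  [IsProbabilityMeasure P] [IsProbabilityMeasure Q] {L f : X → ℝ} {κ : ℝ≥0}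

theorem mul_integral_le_of_lipschitzWith_one_of_isMinOn [OpensMeasurableSpace X] (hlam : 0 ≤ lam)
    (hd : Integrable (fun w : X × X => dist w.1 w.2) (P.prod Q)) (hL : L ∈ admissibleLoss X κ)
    (hmin : IsMinOn (fun L' => lossObjective lam L' P Q) (admissibleLoss X κ) L)
    (hLQP : ∫ z, L z ∂Q ≤ ∫ x, L x ∂P) (hf : f ∈ admissibleLoss X κ) (hf_one : LipschitzWith 1 f) :
    lam * ∫ z, f z ∂Q ≤ (1 + lam) * ∫ x, f x ∂P := by
  obtain ⟨hL_P, hL_Q⟩ := integrable_of_lipschitzWith_of_integrable_dist_prod hd hL.2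
  obtain ⟨hf_P, hf_Q⟩ := integrable_of_lipschitzWith_of_integrable_dist_prod hd hf_one
  have hobjective : unclippedObjective lam L P Q ≤ unclippedObjective lam f P Q :=
    calc unclippedObjective lam L P Q ≤ lossObjective lam L P Q :=
          unclippedObjective_le_lossObjective hlam hd hL_P hL_Q
      _ ≤ lossObjective lam f P Q := hmin hf
      _ = unclippedObjective lam f P Q :=
          lossObjective_eq_unclippedObjective_of_lipschitzWith_one hd hf_one hf_P hf_Q
  have hL_nonneg : 0 ≤ ∫ x, L x ∂P := integral_nonneg hL.1
  have hgap := mul_nonneg hlam (sub_nonneg.2 hLQP)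
  simp only [unclippedObjective] at hobjective
  linarith

theorem mul_integral_le_of_isMinOn [OpensMeasurableSpace X] (hlam : 0 ≤ lam) (hκ : 0 < κ)
    (hd : Integrable (fun w : X × X => dist w.1 w.2) (P.prod Q)) (hL : L ∈ admissibleLoss X κ)
    (hmin : IsMinOn (fun L' => lossObjective lam L' P Q) (admissibleLoss X κ) L)
    (hLQP : ∫ z, L z ∂Q ≤ ∫ x, L x ∂P) {K : ℝ≥0} (hf : f ∈ admissibleLoss X K) :
    lam * ∫ z, f z ∂Q ≤ (1 + lam) * ∫ x, f x ∂P := by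
  obtain ⟨ε, hε, hεf⟩ := exists_pos_mul_mem_admissibleLoss (lt_min hκ one_pos) hf
  have hscaled := mul_integral_le_of_lipschitzWith_one_of_isMinOn hlam hd hL hmin hLQP
    (admissibleLoss_mono (min_le_left κ 1) hεf) (admissibleLoss_mono (min_le_right κ 1) hεf).2
  rw [integral_const_mul, integral_const_mul, mul_left_comm, mul_left_comm (1 + lam)] at hscaled
  exact le_of_mul_le_mul_left hscaled hε

theorem smul_le_of_isMinOn_lossObjective [BorelSpace X] (hlam : 0 ≤ lam) (hκ : 0 < κ)
    (hd : Integrable (fun w : X × X => dist w.1 w.2) (P.prod Q)) (hL : L ∈ admissibleLoss X κ)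
    (hmin : IsMinOn (fun L' => lossObjective lam L' P Q) (admissibleLoss X κ) L)
    (hLQP : ∫ z, L z ∂Q ≤ ∫ x, L x ∂P) : ENNReal.ofReal (lam / (1 + lam)) • Q ≤ P := by
  have : IsFiniteMeasure (ENNReal.ofReal (lam / (1 + lam)) • Q) :=
    Q.smul_finite ENNReal.ofReal_ne_top
  refine measure_le_of_forall_integral_lipschitz_le fun f K hf => ?_
  have hf_mem : (fun x => (f x : ℝ)) ∈ admissibleLoss X K := ⟨fun x => (f x).2, hf⟩
  rw [integral_smul_measure, ENNReal.toReal_ofReal (by positivity), smul_eq_mul,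
    div_mul_eq_mul_div, div_le_iff₀' (by positivity)]
  exact mul_integral_le_of_isMinOn hlam hκ hd hL hmin hLQP hf_mem

end Equilibrium

section Density

variable {X : Type*} [MeasurableSpace X] {μ : Measure X} {p q : X → ℝ}

/-- A probability density with respect to `μ`. Since the Bochner integral of a function that is not
integrable is `0`, the normalization also makes `p` integrable and a.e. measurable. -/
structure IsProbabilityDensity (μ : Measure X) (p : X → ℝ) : Prop where
  nonneg : 0 ≤ᵐ[μ] p
  integral_eq_one : ∫ x, p x ∂μ = 1

/-- The measure `p · μ` with density the positive part of `p`. -/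
noncomputable def densityMeasure (μ : Measure X) (p : X → ℝ) : Measure X :=
  μ.withDensity fun x => ENNReal.ofReal (p x)

namespace IsProbabilityDensity

theorem integrable (hp : IsProbabilityDensity μ p) : Integrable p μ :=
  integrable_of_integral_eq_one hp.integral_eq_one

theorem isProbabilityMeasure_densityMeasure (hp : IsProbabilityDensity μ p) :
    IsProbabilityMeasure (densityMeasure μ p) where
  measure_univ := by
    rw [densityMeasure, withDensity_apply _ MeasurableSet.univ, Measure.restrict_univ,
      ← ofReal_integral_eq_lintegral_ofReal hp.integrable hp.nonneg, hp.integral_eq_one,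
      ENNReal.ofReal_one]

theorem integral_densityMeasure (hp : IsProbabilityDensity μ p) (f : X → ℝ) :
    ∫ x, f x ∂densityMeasure μ p = ∫ x, f x * p x ∂μ := by
  rw [densityMeasure, integral_withDensity_eq_integral_toReal_smul₀
    hp.integrable.aemeasurable.ennreal_ofReal (ae_of_all μ fun _ => ENNReal.ofReal_lt_top)]
  refine integral_congr_ae (hp.nonneg.mono fun x hx => ?_)
  simp only [ENNReal.toReal_ofReal hx, smul_eq_mul, mul_comm]

theorem real_densityMeasure (hp : IsProbabilityDensity μ p) {s : Set X} (hs : MeasurableSet s) :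
    (densityMeasure μ p).real s = ∫ x in s, p x ∂μ := by
  rw [measureReal_def, densityMeasure, withDensity_apply _ hs,
    ← ofReal_integral_eq_lintegral_ofReal hp.integrable.integrableOn (ae_restrict_of_ae hp.nonneg),
    ENNReal.toReal_ofReal (setIntegral_nonneg_of_ae hp.nonneg)]

theorem ae_densityMeasure_mem (hp : IsProbabilityDensity μ p) {D : Set X}
    (hpD : ∀ x, x ∉ D → p x = 0) : ∀ᵐ x ∂densityMeasure μ p, x ∈ D := by
  refine (ae_withDensity_iff' hp.integrable.aemeasurable.ennreal_ofReal).2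
    (ae_of_all μ fun x hx => ?_)
  contrapose! hx
  rw [hpD x hx, ENNReal.ofReal_zero]

theorem integrable_dist_prod_densityMeasure [PseudoMetricSpace X] [OpensMeasurableSpace X]
    [SecondCountableTopology X] (hp : IsProbabilityDensity μ p) (hq : IsProbabilityDensity μ q)
    {D : Set X} (hD : Bornology.IsBounded D) (hpD : ∀ x, x ∉ D → p x = 0)
    (hqD : ∀ x, x ∉ D → q x = 0) :
    Integrable (fun w : X × X => dist w.1 w.2)
      ((densityMeasure μ p).prod (densityMeasure μ q)) := by
  have := hp.isProbabilityMeasure_densityMeasure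
  have := hq.isProbabilityMeasure_densityMeasure
  exact integrable_dist_prod_of_isBounded hD (hp.ae_densityMeasure_mem hpD)
    (hq.ae_densityMeasure_mem hqD)

theorem ae_mul_le_of_smul_densityMeasure_le (hp : IsProbabilityDensity μ p)
    (hq : IsProbabilityDensity μ q) {c : ℝ} (hc : 0 ≤ c)
    (h : ENNReal.ofReal c • densityMeasure μ q ≤ densityMeasure μ p) :
    ∀ᵐ x ∂μ, c * q x ≤ p x := by
  have := hp.isProbabilityMeasure_densityMeasure
  refine ae_le_of_forall_setIntegral_le (hq.integrable.const_mul c) hp.integrable fun s hs _ => ?_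
  have hreal := ENNReal.toReal_mono (measure_ne_top _ s) (h s)
  rwa [← measureReal_def, ← measureReal_def, measureReal_ennreal_smul_apply,
    ENNReal.toReal_ofReal hc, hp.real_densityMeasure hs, hq.real_densityMeasure hs,
    ← integral_const_mul] at hreal

theorem integral_abs_sub_le (hp : IsProbabilityDensity μ p) (hq : IsProbabilityDensity μ q)
    {c : ℝ} (hc : c ≤ 1) (h : ∀ᵐ x ∂μ, c * q x ≤ p x) :
    ∫ x, |p x - q x| ∂μ ≤ 2 * (1 - c) := by
  have hcq := hq.integrable.const_mul c
  have hexcess := hp.integrable.sub' hcq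
  have hdeficit := hq.integrable.const_mul (1 - c)
  calc ∫ x, |p x - q x| ∂μ ≤ ∫ x, (p x - c * q x) + (1 - c) * q x ∂μ := by
        refine integral_mono_ae (hp.integrable.sub hq.integrable).abs (hexcess.add hdeficit) ?_
        filter_upwards [h, hq.nonneg] with x hx hqx
        have hdeficit_nonneg : 0 ≤ (1 - c) * q x := mul_nonneg (sub_nonneg.2 hc) hqx
        exact abs_le.2 ⟨by linarith, by linarith⟩
    _ = 2 * (1 - c) := by
        rw [integral_add hexcess hdeficit, integral_sub hp.integrable hcq, integral_const_mul,
          integral_const_mul, hp.integral_eq_one, hq.integral_eq_one]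
        ring

end IsProbabilityDensity

end Density

theorem lsgan_distributional_consistency_general {X : Type*} [PseudoMetricSpace X]
    [MeasurableSpace X] [BorelSpace X] {μ : Measure X} {p q : X → ℝ}
    (hp : IsProbabilityDensity μ p) (hq : IsProbabilityDensity μ q)
    (hd : Integrable (fun w : X × X => dist w.1 w.2)
      ((densityMeasure μ p).prod (densityMeasure μ q)))
    {lam : ℝ} {κ : ℝ≥0} (hlam : 0 ≤ lam) (hκ : 0 < κ) {L : X → ℝ} (hL : L ∈ admissibleLoss X κ)
    (hmin : IsMinOn (fun L' => lossObjective lam L' (densityMeasure μ p) (densityMeasure μ q))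
      (admissibleLoss X κ) L)
    (hLQP : ∫ z, L z ∂densityMeasure μ q ≤ ∫ x, L x ∂densityMeasure μ p) :
    (∀ᵐ x ∂μ, lam / (1 + lam) * q x ≤ p x) ∧ ∫ x, |p x - q x| ∂μ ≤ 2 / (1 + lam) := by
  have := hp.isProbabilityMeasure_densityMeasure
  have := hq.isProbabilityMeasure_densityMeasure
  have hle : ∀ᵐ x ∂μ, lam / (1 + lam) * q x ≤ p x :=
    hp.ae_mul_le_of_smul_densityMeasure_le hq (by positivity)
      (smul_le_of_isMinOn_lossObjective hlam hκ hd hL hmin hLQP)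
  refine ⟨hle, ?_⟩
  calc ∫ x, |p x - q x| ∂μ ≤ 2 * (1 - lam / (1 + lam)) :=
        hp.integral_abs_sub_le hq (div_le_one_of_le₀ (by linarith) (by positivity)) hle
    _ = 2 / (1 + lam) := by field_simp; ring

section Euclidean

variable {n : ℕ} {p q L : EuclideanSpace ℝ (Fin n) → ℝ} {lam : ℝ}

theorem lsganS_eq_lossObjective (hp : IsProbabilityDensity volume p)
    (hq : IsProbabilityDensity volume q) :
    lsganS n lam L p q =
      lossObjective lam L (densityMeasure volume p) (densityMeasure volume q) := by
  simp only [lsganS, lossObjective, hp.integral_densityMeasure, hq.integral_densityMeasure,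
    dist_eq_norm, ← integral_mul_const, mul_assoc, mul_comm (p _)]

theorem isMinOn_lossObjective_iff_lsganS (hp : IsProbabilityDensity volume p)
    (hq : IsProbabilityDensity volume q) {κ : ℝ≥0} :
    IsMinOn (fun L' => lossObjective lam L' (densityMeasure volume p) (densityMeasure volume q))
        (admissibleLoss _ κ) L ↔
      ∀ L' : EuclideanSpace ℝ (Fin n) → ℝ,
        (∀ x, 0 ≤ L' x) → (∀ x z, |L' x - L' z| ≤ κ * ‖x - z‖) →
        lsganS n lam L p q ≤ lsganS n lam L' p q := by
  simp only [isMinOn_iff, mem_admissibleLoss_iff_norm, and_imp, lsganS_eq_lossObjective hp hq]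

end Euclidean

/-- **Paper's Lemma 1**: distributional consistency of the LS-GAN at a Nash equilibrium.
If `L` is a nonnegative κ-Lipschitz minimizer of `S(·; p, q)` over nonnegative κ-Lipschitz
functions and `∫ L q ≤ ∫ L p`, then `p ≥ (λ/(1+λ)) q` a.e. and `∫ |p − q| ≤ 2/λ`. -/
theorem lsgan_distributional_consistency
    (n : ℕ) (hn : 1 ≤ n)
    (D : Set (EuclideanSpace ℝ (Fin n))) (hD : IsCompact D)
    (lam κ : ℝ) (hlam : 0 < lam) (hκ : 0 < κ)
    (p q : EuclideanSpace ℝ (Fin n) → ℝ)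
    (hp_meas : Measurable p) (hp_nonneg : ∀ x, 0 ≤ p x)
    (hp_int : (∫ x, p x) = 1)
    (hp_lip : ∃ κp : ℝ, ∀ x z, |p x - p z| ≤ κp * ‖x - z‖)
    (hp_supp : ∀ x, x ∉ D → p x = 0)
    (hq_meas : Measurable q) (hq_nonneg : ∀ x, 0 ≤ q x)
    (hq_int : (∫ x, q x) = 1)
    (hq_lip : ∃ κq : ℝ, ∀ x z, |q x - q z| ≤ κq * ‖x - z‖)
    (hq_supp : ∀ x, x ∉ D → q x = 0)
    (L : EuclideanSpace ℝ (Fin n) → ℝ)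
    (hL_nonneg : ∀ x, 0 ≤ L x)
    (hL_lip : ∀ x z, |L x - L z| ≤ κ * ‖x - z‖)
    (ha : ∀ L' : EuclideanSpace ℝ (Fin n) → ℝ,
      (∀ x, 0 ≤ L' x) → (∀ x z, |L' x - L' z| ≤ κ * ‖x - z‖) →
      lsganS n lam L p q ≤ lsganS n lam L' p q)
    (hb : (∫ z, L z * q z) ≤ ∫ x, L x * p x) :
    (∀ᵐ x : EuclideanSpace ℝ (Fin n), lam / (1 + lam) * q x ≤ p x) ∧
      (∫ x, |p x - q x|) ≤ 2 / lam := by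
  have hp : IsProbabilityDensity volume p := ⟨ae_of_all _ hp_nonneg, hp_int⟩
  have hq : IsProbabilityDensity volume q := ⟨ae_of_all _ hq_nonneg, hq_int⟩
  lift κ to ℝ≥0 using hκ.le
  rw [← hp.integral_densityMeasure, ← hq.integral_densityMeasure] at hb
  exact (lsgan_distributional_consistency_general hp hq
    (hp.integrable_dist_prod_densityMeasure hq hD.isBounded hp_supp hq_supp) hlam.le
    (NNReal.coe_pos.1 hκ) (mem_admissibleLoss_iff_norm.2 ⟨hL_nonneg, hL_lip⟩)
    ((isMinOn_lossObjective_iff_lsganS hp hq).2 ha) hb).imp_right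
      fun h => h.trans (by gcongr; linarith)
end

section
/- Suppose L0 ∈ F_κ minimizes S_m over F_κ, and set l_i = L0(x^(i)) for i = 1,…,2m. Define ĥL(x) = max_{1≤i≤2m} (l_i − κ d(x, x^(i)))_+ and t̃L(x) = min_{1≤i≤2m} (l_i + κ d(x, x^(i))). Then ĥL and t̃L both belong to F_κ, they satisfy ĥL(x^(i)) = t̃L(x^(i)) = l_i for every i = 1,…,2m, and both ĥL and t̃L minimize S_m over F_κ. (Paper's Theorem 6: non-parametric characterization of optimal LS-GAN loss functions.) -/
/-- `Fκ κ` is the class of nonnegative κ-Lipschitz functions on a metric space. -/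
def Fkappa {X : Type*} [MetricSpace X] (κ : ℝ) : Set (X → ℝ) :=
  {L | (∀ x, 0 ≤ L x) ∧ ∀ x z, |L x - L z| ≤ κ * dist x z}

/-- The empirical LS-GAN objective on `2m` points `xs` (the first `m` real, the last `m`
generated): `S_m(L) = (1/m) Σᵢ L(x⁽ⁱ⁾) + (λ/m) Σᵢ (d(x⁽ⁱ⁾, x⁽ᵐ⁺ⁱ⁾) + L(x⁽ⁱ⁾) − L(x⁽ᵐ⁺ⁱ⁾))₊`. -/
noncomputable def empiricalS {X : Type*} [MetricSpace X] (lam : ℝ) (m : ℕ)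
    (xs : Fin (m + m) → X) (L : X → ℝ) : ℝ :=
  (1 / (m : ℝ)) * ∑ i : Fin m, L (xs (Fin.castAdd m i)) +
    (lam / (m : ℝ)) * ∑ i : Fin m,
      max (dist (xs (Fin.castAdd m i)) (xs (Fin.natAdd m i)) +
        L (xs (Fin.castAdd m i)) - L (xs (Fin.natAdd m i))) 0

/-!
The objective sees a loss function only through its values at the data points, so any member of
`Fkappa κ` with the same values as a minimizer is again a minimizer. The functions `ĥL` and `t̃L`
are McShane–Whitney extensions of these values: each one is an envelope of cones that belong to
`Fkappa κ`, lie on one side of `L0`, and touch it at their apex.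
-/

section Envelopes

variable {X ι : Type*} [MetricSpace X] {κ : ℝ} {L : X → ℝ}

theorem mem_Fkappa_iff_le_add :
    L ∈ Fkappa κ ↔ (∀ x, 0 ≤ L x) ∧ ∀ x z, L x ≤ L z + κ * dist x z := by
  refine and_congr_right fun _ => ⟨fun h x z => ?_, fun h x z => abs_sub_le_iff.2 ⟨?_, ?_⟩⟩
  · exact sub_le_iff_le_add'.1 (le_of_abs_le (h x z))
  · exact sub_le_iff_le_add'.2 (h x z)
  · exact sub_le_iff_le_add'.2 (dist_comm z x ▸ h z x)

theorem le_add_of_mem_Fkappa (hL : L ∈ Fkappa κ) (x z : X) : L x ≤ L z + κ * dist x z :=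
  (mem_Fkappa_iff_le_add.1 hL).2 x z

theorem iSup_mem_Fkappa [Nonempty ι] {f : ι → X → ℝ} (hf : ∀ i, f i ∈ Fkappa κ)
    (hbdd : ∀ x, BddAbove (Set.range fun i => f i x)) : (fun x => ⨆ i, f i x) ∈ Fkappa κ := by
  refine mem_Fkappa_iff_le_add.2
    ⟨fun x => Real.iSup_nonneg fun i => (hf i).1 x, fun x z => ciSup_le fun i => ?_⟩
  calc f i x ≤ f i z + κ * dist x z := le_add_of_mem_Fkappa (hf i) x z
    _ ≤ (⨆ i, f i z) + κ * dist x z := by gcongr; exact le_ciSup (hbdd z) i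

theorem iInf_mem_Fkappa [Nonempty ι] {f : ι → X → ℝ} (hf : ∀ i, f i ∈ Fkappa κ) :
    (fun x => ⨅ i, f i x) ∈ Fkappa κ := by
  have hbdd (x : X) : BddBelow (Set.range fun i => f i x) :=
    ⟨0, Set.forall_mem_range.2 fun i => (hf i).1 x⟩
  refine mem_Fkappa_iff_le_add.2 ⟨fun x => Real.iInf_nonneg fun i => (hf i).1 x,
    fun x z => sub_le_iff_le_add.1 (le_ciInf fun i => sub_le_iff_le_add.2 ?_)⟩
  calc (⨅ i, f i x) ≤ f i x := ciInf_le (hbdd x) i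
    _ ≤ f i z + κ * dist x z := le_add_of_mem_Fkappa (hf i) x z

theorem max_sub_mul_dist_mem_Fkappa (hκ : 0 ≤ κ) (l : ℝ) (p : X) :
    (fun x => max (l - κ * dist x p) 0) ∈ Fkappa κ := by
  refine mem_Fkappa_iff_le_add.2 ⟨fun x => le_max_right _ _, fun x z => max_le ?_ (by positivity)⟩
  calc l - κ * dist x p ≤ l - κ * dist z p + κ * dist x z := by
        linarith [mul_le_mul_of_nonneg_left (dist_triangle_left z p x) hκ]
    _ ≤ max (l - κ * dist z p) 0 + κ * dist x z := by gcongr; exact le_max_left _ _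

theorem add_mul_dist_mem_Fkappa (hκ : 0 ≤ κ) {l : ℝ} (hl : 0 ≤ l) (p : X) :
    (fun x => l + κ * dist x p) ∈ Fkappa κ := by
  refine mem_Fkappa_iff_le_add.2 ⟨fun x => by positivity, fun x z => ?_⟩
  linarith [mul_le_mul_of_nonneg_left (dist_triangle x z p) hκ]

theorem max_sub_mul_dist_le (hL : L ∈ Fkappa κ) (x p : X) :
    max (L p - κ * dist x p) 0 ≤ L x :=
  max_le (sub_le_iff_le_add.2 (dist_comm p x ▸ le_add_of_mem_Fkappa hL p x)) (hL.1 x)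

/-- The function `ĥL` of the paper: the McShane–Whitney extension from below of the values of `L`
at the points `xs`, truncated at `0`. The supremum takes Lean's default value `0` where it is
unbounded, which does not happen for `L ∈ Fkappa κ`. -/
noncomputable def lowerExtension (κ : ℝ) (xs : ι → X) (L : X → ℝ) (x : X) : ℝ :=
  ⨆ i, max (L (xs i) - κ * dist x (xs i)) 0

/-- The function `t̃L` of the paper: the McShane–Whitney extension from above of the values of `L`
at the points `xs`. The infimum takes Lean's default value `0` for an empty family of points. -/
noncomputable def upperExtension (κ : ℝ) (xs : ι → X) (L : X → ℝ) (x : X) : ℝ :=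
  ⨅ i, (L (xs i) + κ * dist x (xs i))

theorem bddAbove_range_max_sub_mul_dist (hL : L ∈ Fkappa κ) (xs : ι → X) (x : X) :
    BddAbove (Set.range fun i => max (L (xs i) - κ * dist x (xs i)) 0) :=
  ⟨L x, Set.forall_mem_range.2 fun i => max_sub_mul_dist_le hL x (xs i)⟩

theorem bddBelow_range_add_mul_dist (hL : L ∈ Fkappa κ) (xs : ι → X) (x : X) :
    BddBelow (Set.range fun i => L (xs i) + κ * dist x (xs i)) :=
  ⟨L x, Set.forall_mem_range.2 fun i => le_add_of_mem_Fkappa hL x (xs i)⟩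

theorem lowerExtension_mem_Fkappa [Nonempty ι] (hκ : 0 ≤ κ) (hL : L ∈ Fkappa κ) (xs : ι → X) :
    lowerExtension κ xs L ∈ Fkappa κ :=
  iSup_mem_Fkappa (fun _ => max_sub_mul_dist_mem_Fkappa hκ _ _)
    (bddAbove_range_max_sub_mul_dist hL xs)

theorem upperExtension_mem_Fkappa [Nonempty ι] (hκ : 0 ≤ κ) {xs : ι → X}
    (hL : ∀ i, 0 ≤ L (xs i)) : upperExtension κ xs L ∈ Fkappa κ :=
  iInf_mem_Fkappa fun i => add_mul_dist_mem_Fkappa hκ (hL i) _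

theorem lowerExtension_apply (hL : L ∈ Fkappa κ) (xs : ι → X) (j : ι) :
    lowerExtension κ xs L (xs j) = L (xs j) := by
  have : Nonempty ι := ⟨j⟩
  refine le_antisymm (ciSup_le fun i => max_sub_mul_dist_le hL (xs j) (xs i)) ?_
  exact le_ciSup_of_le (bddAbove_range_max_sub_mul_dist hL xs (xs j)) j (by simp)

theorem upperExtension_apply (hL : L ∈ Fkappa κ) (xs : ι → X) (j : ι) :
    upperExtension κ xs L (xs j) = L (xs j) := by
  have : Nonempty ι := ⟨j⟩
  refine le_antisymm ?_ (le_ciInf fun i => le_add_of_mem_Fkappa hL (xs j) (xs i))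
  exact ciInf_le_of_le (bddBelow_range_add_mul_dist hL xs (xs j)) j (by simp)

end Envelopes

theorem empiricalS_factorsThrough {X : Type*} [MetricSpace X] (lam : ℝ) (m : ℕ)
    (xs : Fin (m + m) → X) : (empiricalS lam m xs).FactorsThrough (· ∘ xs) := by
  intro L L' h
  have hvalues (j : Fin (m + m)) : L (xs j) = L' (xs j) := congrFun h j
  simp only [empiricalS, hvalues]

theorem lsgan_nonparametric_characterization_general
    {X ι α : Type*} [MetricSpace X] [Nonempty ι] [Preorder α] {κ : ℝ} (hκ : 0 ≤ κ) {xs : ι → X}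
    {S : (X → ℝ) → α} (hS : S.FactorsThrough (· ∘ xs)) {L0 : X → ℝ} (hL0 : L0 ∈ Fkappa κ)
    (hmin : ∀ L ∈ Fkappa κ, S L0 ≤ S L) :
    lowerExtension κ xs L0 ∈ Fkappa κ ∧
    upperExtension κ xs L0 ∈ Fkappa κ ∧
    (∀ j, lowerExtension κ xs L0 (xs j) = L0 (xs j)) ∧
    (∀ j, upperExtension κ xs L0 (xs j) = L0 (xs j)) ∧
    (∀ L ∈ Fkappa κ, S (lowerExtension κ xs L0) ≤ S L) ∧
    (∀ L ∈ Fkappa κ, S (upperExtension κ xs L0) ≤ S L) := by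
  have hoptimal {L' : X → ℝ} (h : ∀ j, L' (xs j) = L0 (xs j)) : ∀ L ∈ Fkappa κ, S L' ≤ S L := by
    have hvalues : L' ∘ xs = L0 ∘ xs := funext h
    exact fun L hL => (hS hvalues).trans_le (hmin L hL)
  have hlower := lowerExtension_apply hL0 xs
  have hupper := upperExtension_apply hL0 xs
  exact ⟨lowerExtension_mem_Fkappa hκ hL0 xs, upperExtension_mem_Fkappa hκ fun i => hL0.1 (xs i),
    hlower, hupper, hoptimal hlower, hoptimal hupper⟩

/-- **Paper's Theorem 6**: non-parametric characterization of optimal LS-GAN loss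
functions. If `L0 ∈ F_κ` minimizes `S_m`, then the cone-shaped functions
`ĥL(x) = maxᵢ (L0(x⁽ⁱ⁾) − κ d(x, x⁽ⁱ⁾))₊` and `t̃L(x) = minᵢ (L0(x⁽ⁱ⁾) + κ d(x, x⁽ⁱ⁾))`
belong to `F_κ`, coincide with `L0` on the data points, and also minimize `S_m`. -/
theorem lsgan_nonparametric_characterization
    {X : Type*} [MetricSpace X] (κ lam : ℝ) (hκ : 0 < κ) (hlam : 0 < lam)
    (m : ℕ) (hm : 0 < m) (xs : Fin (m + m) → X)
    (L0 : X → ℝ) (hL0 : L0 ∈ Fkappa κ)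
    (hmin : ∀ L ∈ Fkappa κ, empiricalS lam m xs L0 ≤ empiricalS lam m xs L) :
    (fun x => ⨆ i : Fin (m + m), max (L0 (xs i) - κ * dist x (xs i)) 0) ∈ Fkappa κ ∧
    (fun x => ⨅ i : Fin (m + m), (L0 (xs i) + κ * dist x (xs i))) ∈ Fkappa κ ∧
    (∀ j : Fin (m + m),
      (⨆ i : Fin (m + m), max (L0 (xs i) - κ * dist (xs j) (xs i)) 0) = L0 (xs j)) ∧
    (∀ j : Fin (m + m),
      (⨅ i : Fin (m + m), (L0 (xs i) + κ * dist (xs j) (xs i))) = L0 (xs j)) ∧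
    (∀ L ∈ Fkappa κ,
      empiricalS lam m xs (fun x => ⨆ i : Fin (m + m), max (L0 (xs i) - κ * dist x (xs i)) 0)
        ≤ empiricalS lam m xs L) ∧
    (∀ L ∈ Fkappa κ,
      empiricalS lam m xs (fun x => ⨅ i : Fin (m + m), (L0 (xs i) + κ * dist x (xs i)))
        ≤ empiricalS lam m xs L) := by
  have : Nonempty (Fin (m + m)) := ⟨⟨0, Nat.add_pos_left hm m⟩⟩
  exact lsgan_nonparametric_characterization_general hκ.le (empiricalS_factorsThrough lam m xs)
    hL0 hmin
end
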